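/- Let n ≥ 3, let S ⊆ Σ^n be a double-MDS-code, let k ∈ {1,…,n}, and for i ∈ Σ put P_i = S|_k^i ∩ {0,1}^(n−1). Suppose that either (a) n = 3, some P_i equals {0,1}^2, and all four P_i are nonempty, or (b) {P₀,P₁,P₂,P₃} = {{0,1}^(n−1), {ᾱ}, {¬ᾱ}, {0,1}^(n−1) \ {ᾱ,¬ᾱ}} for some ᾱ ∈ {0,1}^(n−1), where ¬ᾱ is the coordinatewise complement of ᾱ. Then neither S nor Σ^n \ S is splittable. -/

import Mathlib

/-- The alphabet `Σ = {0,1,2,3}`. -/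
abbrev V4 := Fin 4

/-- The `k`-edge through `x`. -/
def kEdge {n : ℕ} (x : Fin n → V4) (k : Fin n) : Set (Fin n → V4) :=
  {y | ∃ a : V4, y = Function.update x k a}

/-- A (distance 2) MDS code. -/
def IsMDSCode {n : ℕ} (C : Set (Fin n → V4)) : Prop :=
  ∀ (x : Fin n → V4) (k : Fin n), (kEdge x k ∩ C).ncard = 1

/-- A double-MDS-code. -/
def IsDoubleMDSCode {n : ℕ} (S : Set (Fin n → V4)) : Prop :=
  ∀ (x : Fin n → V4) (k : Fin n), (kEdge x k ∩ S).ncard = 2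

/-- A set is splittable if it is the union of two disjoint MDS codes. -/
def IsSplittable {n : ℕ} (S : Set (Fin n → V4)) : Prop :=
  ∃ C₁ C₂ : Set (Fin n → V4),
    IsMDSCode C₁ ∧ IsMDSCode C₂ ∧ Disjoint C₁ C₂ ∧ S = C₁ ∪ C₂

/-- The `y`-th layer of `S ⊆ Σ^(n+1)` in direction `k`. -/
def layer {n : ℕ} (S : Set (Fin (n + 1) → V4)) (k : Fin (n + 1)) (y : V4) :
    Set (Fin n → V4) :=
  {x | k.insertNth y x ∈ S}

/-- The Boolean `n`-cube `{0,1}^n` inside `Σ^n`. -/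
def boolCube (n : ℕ) : Set (Fin n → V4) :=
  {x | ∀ i, x i = 0 ∨ x i = 1}


namespace UBT

def mk : Bool → Bool → V4
  | false, false => 0
  | false, true => 1
  | true, false => 2
  | true, true => 3

def pt {n : ℕ} (T b : Fin n → Bool) : Fin n → V4 := fun i => mk (T i) (b i)

def Good (g : V4 → ℤ) : Prop :=
  ∃ p q : V4, p ≠ q ∧ ∀ a, g a = if a = p then 1 else if a = q then -1 else 0

theorem Good.neg {g : V4 → ℤ} (h : Good g) {a b : V4} (hab : a ≠ b)
    (ha : g a ≠ 0) (hb : g b ≠ 0) : g b = - g a := by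
  obtain ⟨p, q, hpq, hg⟩ := h
  simp only [hg] at ha hb ⊢
  grind

theorem Good.three {g : V4 → ℤ} (h : Good g) {a b c : V4} (hab : a ≠ b) (hac : a ≠ c)
    (hbc : b ≠ c) (ha : g a ≠ 0) (hb : g b ≠ 0) : g c = 0 := by
  obtain ⟨p, q, hpq, hg⟩ := h
  rw [hg] at ha hb ⊢
  grind

theorem Good.nthree {g : V4 → ℤ} (h : Good g) {a b c : V4} (hab : a ≠ b) (hac : a ≠ c)
    (hbc : b ≠ c) (ha : g a = 0) (hb : g b = 0) : g c ≠ 0 := by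
  obtain ⟨p, q, hpq, hg⟩ := h
  rw [hg] at ha hb ⊢
  clear hg
  revert a b c p q
  decide

theorem Good.mk_cases {g : V4 → ℤ} (h : Good g) (t v : Bool) :
    (g (mk t v) ≠ 0 ∧ g (mk t !v) ≠ 0 → ∀ w, g (mk (!t) w) = 0) ∧
    (g (mk t v) = 0 ∧ g (mk t !v) = 0 → ∀ w, g (mk (!t) w) ≠ 0) ∧
    (g (mk t v) ≠ 0 ∧ g (mk t !v) = 0 →
      ∃ w, g (mk (!t) w) = - g (mk t v) ∧ g (mk (!t) (!w)) = 0) := by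
  obtain ⟨p, q, hpq, hg⟩ := h
  simp only [hg]
  clear hg
  revert p q t v
  decide

theorem mk_ne (t v : Bool) : mk t v ≠ mk t !v := by
  revert t v; decide

theorem pt_update {n : ℕ} (T b : Fin n → Bool) (i : Fin n) (t v : Bool) :
    pt (Function.update T i t) (Function.update b i v) =
      Function.update (pt T b) i (mk t v) := by
  funext j
  by_cases h : j = i
  · subst h; simp [pt]
  · simp [pt, h]

theorem pt_update' {n : ℕ} (T b : Fin n → Bool) (i : Fin n) (v : Bool) :
    pt T (Function.update b i v) = Function.update (pt T b) i (mk (T i) v) := by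
  rw [← pt_update, Function.update_eq_self]

def sg {n : ℕ} (b : Fin n → Bool) : ℤ := ∏ i, (if b i then -1 else 1)

theorem sg_sq {n : ℕ} (b : Fin n → Bool) : sg b * sg b = 1 := by
  unfold sg
  rw [← Finset.prod_mul_distrib]
  apply Finset.prod_eq_one
  intro i _
  split_ifs <;> rfl

theorem sg_update {n : ℕ} (b : Fin n → Bool) (i : Fin n) (v : Bool) :
    sg (Function.update b i v) = if v = b i then sg b else - sg b := by
  unfold sg
  rw [← Finset.mul_prod_erase _ _ (Finset.mem_univ i),
    ← Finset.mul_prod_erase _ (fun j => if b j then (-1 : ℤ) else 1) (Finset.mem_univ i)]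
  have : ∏ x ∈ Finset.univ.erase i, (if Function.update b i v x then (-1 : ℤ) else 1)
      = ∏ x ∈ Finset.univ.erase i, (if b x then (-1 : ℤ) else 1) := by
    apply Finset.prod_congr rfl
    intro x hx
    rw [Function.update_of_ne (Finset.ne_of_mem_erase hx)]
  rw [this]
  simp only [Function.update_self]
  cases v <;> cases b i <;> simp

theorem const_of_inv {n : ℕ} (F : (Fin n → Bool) → ℤ)
    (h : ∀ b i, F (Function.update b i (!b i)) = F b) (b b' : Fin n → Bool) : F b = F b' := by
  have h' : ∀ b i v, F (Function.update b i v) = F b := by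
    intro b i v
    by_cases hv : v = b i
    · rw [hv, Function.update_eq_self]
    · have : v = !b i := by revert hv; cases v <;> cases b i <;> simp
      rw [this, h]
  have key : ∀ s : Finset (Fin n), F (s.piecewise b' b) = F b := by
    intro s
    induction s using Finset.induction_on with
    | empty => simp
    | insert a s ha ih => rw [Finset.piecewise_insert, h', ih]
  have := key Finset.univ
  rw [Finset.piecewise_univ] at this
  exact this.symm

theorem upd_ne {n : ℕ} (b : Fin n → Bool) (i : Fin n) : Function.update b i (!b i) ≠ b := by
  intro h
  have := congrFun h i
  simp at this

theorem const_of_inv' {n : ℕ} (F : (Fin n → Bool) → ℤ) (β : Fin n → Bool)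
    (hn : 2 ≤ n)
    (h : ∀ b i, b ≠ β → Function.update b i (!b i) ≠ β → F (Function.update b i (!b i)) = F b)
    (b b' : Fin n → Bool) (hb : b ≠ β) (hb' : b' ≠ β) : F b = F b' := by
  classical
  let i0 : Fin n := ⟨0, by omega⟩
  let i1 : Fin n := ⟨1, by omega⟩
  have nb : ∀ i j, i ≠ j → F (Function.update β i (!β i)) = F (Function.update β j (!β j)) := by
    intro i j hij
    have e1 := h (Function.update β i (!β i)) j (upd_ne _ _)
    have e2 := h (Function.update β j (!β j)) i (upd_ne _ _)
    rw [Function.update_of_ne hij] at e2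
    rw [Function.update_of_ne hij.symm] at e1
    rw [Function.update_comm hij.symm] at e2
    have hne : Function.update (Function.update β i (!β i)) j (!β j) ≠ β := by
      intro h
      have := congrFun h j
      simp at this
    rw [← e1 hne, ← e2 hne]
  let G : (Fin n → Bool) → ℤ := fun b => if b = β then F (Function.update β i0 (!β i0)) else F b
  have hG : ∀ b i, G (Function.update b i (!b i)) = G b := by
    intro b i
    have nb' : ∀ i, F (Function.update β i (!β i)) = F (Function.update β i0 (!β i0)) := by
      intro i
      by_cases hi : i = i0
      · rw [hi]
      · exact nb _ _ hi
    simp only [G]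
    by_cases h1 : b = β
    · subst h1
      rw [if_neg (upd_ne _ _), if_pos rfl, nb']
    · by_cases h2 : Function.update b i (!b i) = β
      · rw [if_pos h2, if_neg h1, ← nb' i]
        subst h2
        simp
      · rw [if_neg h1, if_neg h2, h b i h1 h2]
  have := const_of_inv G hG b b'
  simpa [G, hb, hb'] using this

section core
variable {n : ℕ} (f : V4 → (Fin n → V4) → ℤ)

def Hor : Prop := ∀ l x i, Good (fun a => f l (Function.update x i a))
def Ver : Prop := ∀ x, Good (fun l => f l x)

variable {f}

theorem flip_neg (hf : Hor f) (l : V4) (T b : Fin n → Bool) (i : Fin n)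
    (h1 : f l (pt T b) ≠ 0) (h2 : f l (pt T (Function.update b i (!b i))) ≠ 0) :
    f l (pt T (Function.update b i (!b i))) = - f l (pt T b) := by
  have g := hf l (pt T b) i
  have := g.neg (a := mk (T i) (b i)) (b := mk (T i) (!b i)) (mk_ne _ _)
  simp only [← pt_update', Function.update_eq_self] at this
  exact this h1 h2

theorem par_full (hf : Hor f) (l : V4) (T : Fin n → Bool) (h : ∀ b, f l (pt T b) ≠ 0) :
    ∃ κ : ℤ, κ ≠ 0 ∧ ∀ b, f l (pt T b) = κ * sg b := by
  have c := const_of_inv (fun b => f l (pt T b) * sg b) (by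
    intro b i
    rw [flip_neg hf l T b i (h _) (h _), sg_update]
    simp)
  refine ⟨f l (pt T (fun _ => false)) * sg (n := n) (fun _ => false), ?_, fun b => ?_⟩
  · have := sg_sq (n := n) (fun _ => false)
    intro h0
    rcases mul_eq_zero.1 h0 with h1 | h1
    · exact h _ h1
    · rw [h1] at this; simp at this
  · have h1 := c b (fun _ => false)
    rw [← h1, mul_assoc, sg_sq, mul_one]

theorem par_but (hn : 2 ≤ n) (hf : Hor f) (l : V4) (T β : Fin n → Bool)
    (h : ∀ b, f l (pt T b) = 0 ↔ b = β) :
    ∃ κ : ℤ, κ ≠ 0 ∧ ∀ b, b ≠ β → f l (pt T b) = κ * sg b := by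
  have c := const_of_inv' (fun b => f l (pt T b) * sg b) β hn (by
    intro b i h1 h2
    rw [flip_neg hf l T b i (by rwa [Ne, h]) (by rwa [Ne, h]), sg_update]
    simp)
  let i0 : Fin n := ⟨0, by omega⟩
  set b0 := Function.update β i0 (!β i0) with hb0
  have hb : b0 ≠ β := upd_ne _ _
  refine ⟨f l (pt T b0) * sg b0, ?_, fun b hb' => ?_⟩
  · have := sg_sq b0
    intro h0
    rcases mul_eq_zero.1 h0 with h1 | h1
    · exact hb ((h _).1 h1)
    · rw [h1] at this; simp at this
  · have h1 := c b b0 hb' hb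
    rw [← h1, mul_assoc, sg_sq, mul_one]

theorem exists_third (hn : 2 ≤ n) (β1 β2 : Fin n → Bool) : ∃ b, b ≠ β1 ∧ b ≠ β2 := by
  let i0 : Fin n := ⟨0, by omega⟩
  let i1 : Fin n := ⟨1, by omega⟩
  have h01 : i1 ≠ i0 := by simp [i0, i1]
  refine ⟨Function.update (Function.update β1 i0 (!β1 i0)) i1 (!β2 i1), ?_, ?_⟩
  · intro h
    have := congrFun h i0
    rw [Function.update_of_ne h01.symm] at this
    simp at this
  · intro h
    have := congrFun h i1
    simp at this

/-- the horizontal edge at `b` in direction `i`, both halves. -/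
theorem edge_cases (hf : Hor f) (l : V4) (T b : Fin n → Bool) (i : Fin n) (v : Bool) :
    (f l (pt T (Function.update b i v)) ≠ 0 ∧ f l (pt T (Function.update b i (!v))) ≠ 0 →
      ∀ w, f l (pt (Function.update T i (!T i)) (Function.update b i w)) = 0) ∧
    (f l (pt T (Function.update b i v)) = 0 ∧ f l (pt T (Function.update b i (!v))) = 0 →
      ∀ w, f l (pt (Function.update T i (!T i)) (Function.update b i w)) ≠ 0) ∧
    (f l (pt T (Function.update b i v)) ≠ 0 ∧ f l (pt T (Function.update b i (!v))) = 0 →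
      ∃ w, f l (pt (Function.update T i (!T i)) (Function.update b i w)) =
          - f l (pt T (Function.update b i v)) ∧
        f l (pt (Function.update T i (!T i)) (Function.update b i (!w))) = 0) := by
  have g := (hf l (pt T b) i).mk_cases (T i) v
  rw [pt_update', pt_update']
  simp only [pt_update]
  exact g

theorem full_to_empty (hf : Hor f) (l : V4) (T : Fin n → Bool) (i : Fin n)
    (h : ∀ b, f l (pt T b) ≠ 0) : ∀ b, f l (pt (Function.update T i (!T i)) b) = 0 := by
  intro b
  have := (edge_cases hf l T b i (b i)).1 ⟨h _, h _⟩ (b i)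
  rwa [Function.update_eq_self] at this

theorem empty_to_full (hf : Hor f) (l : V4) (T : Fin n → Bool) (i : Fin n)
    (h : ∀ b, f l (pt T b) = 0) : ∀ b, f l (pt (Function.update T i (!T i)) b) ≠ 0 := by
  intro b
  have := (edge_cases hf l T b i (b i)).2.1 ⟨h _, h _⟩ (b i)
  rwa [Function.update_eq_self] at this

theorem bnot_eq {v w : Bool} (h : v ≠ w) : v = !w := by
  revert v w; decide

theorem single_to_but (hf : Hor f) (l : V4) (T β : Fin n → Bool) (i : Fin n)
    (h : ∀ b, f l (pt T b) ≠ 0 ↔ b = β) :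
    ∃ v, (∀ b, f l (pt (Function.update T i (!T i)) b) = 0 ↔ b = Function.update β i v) ∧
      f l (pt (Function.update T i (!T i)) (Function.update β i (!v))) = - f l (pt T β) := by
  have hz : ∀ b, b ≠ β → f l (pt T b) = 0 := fun b hb => by
    by_contra hc; exact hb ((h b).1 hc)
  have hβ := (h β).2 rfl
  obtain ⟨w, hw1, hw2⟩ := (edge_cases hf l T β i (β i)).2.2
    ⟨by rwa [Function.update_eq_self], hz _ (upd_ne _ _)⟩
  rw [Function.update_eq_self] at hw1
  refine ⟨!w, fun b => ⟨fun hb => ?_, fun hb => hb ▸ hw2⟩, by simpa using hw1⟩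
  by_cases hc : ∃ v, b = Function.update β i v
  · obtain ⟨v, rfl⟩ := hc
    by_cases hv : v = w
    · subst hv
      rw [hw1] at hb
      exact absurd (neg_eq_zero.1 hb) hβ
    · rw [bnot_eq hv]
  · exfalso
    have hne : ∀ v, Function.update b i v ≠ β := by
      intro v hv
      apply hc
      exact ⟨b i, by rw [← hv]; simp⟩
    have := (edge_cases hf l T b i (b i)).2.1 ⟨hz _ (hne _), hz _ (hne _)⟩ (b i)
    rw [Function.update_eq_self] at this
    exact this hb

theorem but_to_single (hf : Hor f) (l : V4) (T β : Fin n → Bool) (i : Fin n)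
    (h : ∀ b, f l (pt T b) = 0 ↔ b = β) :
    ∃ v, (∀ b, f l (pt (Function.update T i (!T i)) b) ≠ 0 ↔ b = Function.update β i v) ∧
      f l (pt (Function.update T i (!T i)) (Function.update β i v)) =
        - f l (pt T (Function.update β i (!β i))) := by
  have hz : ∀ b, b ≠ β → f l (pt T b) ≠ 0 := fun b hb hc => hb ((h b).1 hc)
  have hβ := (h β).2 rfl
  have hβ' := hz _ (upd_ne β i)
  obtain ⟨w, hw1, hw2⟩ := (edge_cases hf l T β i (!β i)).2.2
    ⟨hβ', by rwa [Bool.not_not, Function.update_eq_self]⟩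
  refine ⟨w, fun b => ⟨fun hb => ?_, fun hb => ?_⟩, hw1⟩
  · by_cases hc : ∃ v, b = Function.update β i v
    · obtain ⟨v, rfl⟩ := hc
      by_cases hv : v = w
      · rw [hv]
      · rw [bnot_eq hv] at hb
        exact absurd hw2 hb
    · exfalso
      have hne : ∀ v, Function.update b i v ≠ β := by
        intro v hv
        apply hc
        exact ⟨b i, by rw [← hv]; simp⟩
      have := (edge_cases hf l T b i (b i)).1 ⟨hz _ (hne _), hz _ (hne _)⟩ (b i)
      rw [Function.update_eq_self] at this
      exact hb this
  · rw [hb, hw1]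
    exact neg_ne_zero.2 hβ'

theorem stepA (hn : 2 ≤ n) (hf : Hor f) (hv : Ver f) {l0 l1 l2 : V4}
    (h01 : l0 ≠ l1) (h02 : l0 ≠ l2) (h12 : l1 ≠ l2) (T β1 β2 : Fin n → Bool)
    (i : Fin n) (hi : β1 i ≠ β2 i)
    (a0 : ∀ b, f l0 (pt T b) ≠ 0) (a1 : ∀ b, f l1 (pt T b) ≠ 0 ↔ b = β1)
    (a2 : ∀ b, f l2 (pt T b) ≠ 0 ↔ b = β2) :
    ∃ T' : Fin n → Bool, ∃ v, (∀ b, f l0 (pt T' b) = 0) ∧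
      (∀ b, f l1 (pt T' b) = 0 ↔ b = Function.update β1 i v) ∧
      (∀ b, f l2 (pt T' b) = 0 ↔ b = Function.update β2 i v) := by
  obtain ⟨v1, p1, q1⟩ := single_to_but hf l1 T β1 i a1
  obtain ⟨v2, p2, q2⟩ := single_to_but hf l2 T β2 i a2
  have hv12 : v1 = v2 := by
    obtain ⟨κ, hκ, c0⟩ := par_full hf l0 T a0
    obtain ⟨κ1, hκ1, c1⟩ := par_but hn hf l1 _ _ p1
    obtain ⟨κ2, hκ2, c2⟩ := par_but hn hf l2 _ _ p2
    have d1 := (hv (pt T β1)).neg h01 (a0 _) ((a1 _).2 rfl)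
    have d2 := (hv (pt T β2)).neg h02 (a0 _) ((a2 _).2 rfl)
    have ne : ∀ (β : Fin n → Bool) v, Function.update β i (!v) ≠ Function.update β i v := by
      intro β v h
      have := congrFun h i
      simp at this
    rw [c1 _ (ne _ _), d1, c0, sg_update] at q1
    rw [c2 _ (ne _ _), d2, c0, sg_update] at q2
    obtain ⟨b, hb1, hb2⟩ := exists_third hn (Function.update β1 i v1) (Function.update β2 i v2)
    have d3 := (hv _).neg h12 (mt (p1 b).1 hb1) (mt (p2 b).1 hb2)
    rw [c1 _ hb1, c2 _ hb2] at d3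
    have s1 := sg_sq β1
    have s2 := sg_sq β2
    have s3 := sg_sq b
    have e3 : κ2 = -κ1 := by linear_combination sg b * d3 + (-κ2 - κ1) * s3
    have e1 : κ1 = if (!v1) = β1 i then κ else -κ := by
      split_ifs at q1 ⊢
      · linear_combination sg β1 * q1 + (κ - κ1) * s1
      · linear_combination -sg β1 * q1 + (-κ - κ1) * s1
    have e2 : κ2 = if (!v2) = β2 i then κ else -κ := by
      split_ifs at q2 ⊢
      · linear_combination sg β2 * q2 + (κ - κ2) * s2
      · linear_combination -sg β2 * q2 + (-κ - κ2) * s2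
    clear q1 q2 p1 p2 a0 a1 a2 d1 d2 d3 c0 c1 c2
    revert hi e1 e2
    generalize β1 i = x
    generalize β2 i = y
    cases x <;> cases y <;> cases v1 <;> cases v2 <;> simp <;> intros <;> omega
  subst hv12
  exact ⟨_, v1, full_to_empty hf l0 T i a0, p1, p2⟩

theorem stepB (hn : 2 ≤ n) (hf : Hor f) (hv : Ver f) {l0 l1 l2 : V4}
    (h01 : l0 ≠ l1) (h02 : l0 ≠ l2) (h12 : l1 ≠ l2) (T β1 β2 : Fin n → Bool)
    (i : Fin n) (hi : β1 i ≠ β2 i)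
    (a0 : ∀ b, f l0 (pt T b) = 0) (a1 : ∀ b, f l1 (pt T b) = 0 ↔ b = β1)
    (a2 : ∀ b, f l2 (pt T b) = 0 ↔ b = β2) :
    ∃ T' : Fin n → Bool, ∃ v, (∀ b, f l0 (pt T' b) ≠ 0) ∧
      (∀ b, f l1 (pt T' b) ≠ 0 ↔ b = Function.update β1 i v) ∧
      (∀ b, f l2 (pt T' b) ≠ 0 ↔ b = Function.update β2 i v) := by
  obtain ⟨v1, p1, q1⟩ := but_to_single hf l1 T β1 i a1
  obtain ⟨v2, p2, q2⟩ := but_to_single hf l2 T β2 i a2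
  have p0 := empty_to_full hf l0 T i a0
  have hv12 : v1 = v2 := by
    obtain ⟨κ, hκ, c0⟩ := par_full hf l0 _ p0
    obtain ⟨κ1, hκ1, c1⟩ := par_but hn hf l1 _ _ a1
    obtain ⟨κ2, hκ2, c2⟩ := par_but hn hf l2 _ _ a2
    have d1 := (hv _).neg h01 (p0 _) ((p1 _).2 rfl)
    have d2 := (hv _).neg h02 (p0 _) ((p2 _).2 rfl)
    rw [d1, c1 _ (upd_ne _ _), c0, sg_update, sg_update,
      if_neg (show ¬ ((!β1 i) = β1 i) by simp)] at q1
    rw [d2, c2 _ (upd_ne _ _), c0, sg_update, sg_update,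
      if_neg (show ¬ ((!β2 i) = β2 i) by simp)] at q2
    obtain ⟨b, hb1, hb2⟩ := exists_third hn β1 β2
    have d3 := (hv _).neg h12 (mt (a1 b).1 hb1) (mt (a2 b).1 hb2)
    rw [c1 _ hb1, c2 _ hb2] at d3
    have s1 := sg_sq β1
    have s2 := sg_sq β2
    have s3 := sg_sq b
    have e3 : κ2 = -κ1 := by linear_combination sg b * d3 + (-κ2 - κ1) * s3
    have e1 : κ1 = if v1 = β1 i then -κ else κ := by
      split_ifs at q1 ⊢
      · linear_combination -sg β1 * q1 + (-κ - κ1) * s1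
      · linear_combination -sg β1 * q1 + (κ - κ1) * s1
    have e2 : κ2 = if v2 = β2 i then -κ else κ := by
      split_ifs at q2 ⊢
      · linear_combination -sg β2 * q2 + (-κ - κ2) * s2
      · linear_combination -sg β2 * q2 + (κ - κ2) * s2
    clear q1 q2 p0 p1 p2 a0 a1 a2 d1 d2 d3 c0 c1 c2
    revert hi e1 e2
    generalize β1 i = x
    generalize β2 i = y
    cases x <;> cases y <;> cases v1 <;> cases v2 <;> simp <;> intros <;> omega
  subst hv12
  exact ⟨_, v1, p0, p1, p2⟩

theorem dist_lt (β1 β2 : Fin n → Bool) (i : Fin n) (hi : β1 i ≠ β2 i) (v : Bool) :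
    hammingDist (Function.update β1 i v) (Function.update β2 i v) < hammingDist β1 β2 := by
  unfold hammingDist
  apply Finset.card_lt_card
  rw [Finset.ssubset_iff_of_subset]
  · exact ⟨i, by simp [hi], by simp⟩
  · intro j
    by_cases hj : j = i
    · subst hj; simp
    · simp [hj]

theorem main (hn : 2 ≤ n) (hf : Hor f) (hv : Ver f) {l0 l1 l2 : V4}
    (h01 : l0 ≠ l1) (h02 : l0 ≠ l2) (h12 : l1 ≠ l2) (d : ℕ) :
    ∀ T β1 β2 : Fin n → Bool, hammingDist β1 β2 = d →
    ¬ ((∀ b, f l0 (pt T b) ≠ 0) ∧ (∀ b, f l1 (pt T b) ≠ 0 ↔ b = β1) ∧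
        (∀ b, f l2 (pt T b) ≠ 0 ↔ b = β2)) ∧
    ¬ ((∀ b, f l0 (pt T b) = 0) ∧ (∀ b, f l1 (pt T b) = 0 ↔ b = β1) ∧
        (∀ b, f l2 (pt T b) = 0 ↔ b = β2)) := by
  induction d using Nat.strong_induction_on with
  | _ d ih =>
    intro T β1 β2 hd
    by_cases hβ : β1 = β2
    · subst hβ
      refine ⟨fun ⟨a0, a1, a2⟩ => ?_, fun ⟨a0, a1, a2⟩ => ?_⟩
      · exact (a2 β1).2 rfl ((hv (pt T β1)).three h01 h02 h12 (a0 _) ((a1 _).2 rfl))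
      · exact (hv (pt T β1)).nthree h01 h02 h12 (a0 _) ((a1 _).2 rfl) ((a2 β1).2 rfl)
    · obtain ⟨i, hi⟩ := Function.ne_iff.1 hβ
      refine ⟨fun ⟨a0, a1, a2⟩ => ?_, fun ⟨a0, a1, a2⟩ => ?_⟩
      · obtain ⟨T', v, r⟩ := stepA hn hf hv h01 h02 h12 T β1 β2 i hi a0 a1 a2
        exact (ih _ (hd ▸ dist_lt β1 β2 i hi v) T' _ _ rfl).2 r
      · obtain ⟨T', v, r⟩ := stepB hn hf hv h01 h02 h12 T β1 β2 i hi a0 a1 a2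
        exact (ih _ (hd ▸ dist_lt β1 β2 i hi v) T' _ _ rfl).1 r

end core

theorem edge_ncard {n : ℕ} (x : Fin n → V4) (k : Fin n) (C : Set (Fin n → V4)) :
    (kEdge x k ∩ C).ncard = {a : V4 | Function.update x k a ∈ C}.ncard := by
  have : kEdge x k ∩ C = (fun a => Function.update x k a) '' {a | Function.update x k a ∈ C} := by
    ext y
    simp only [kEdge, Set.mem_inter_iff, Set.mem_ofPred_eq, Set.mem_image]
    constructor
    · rintro ⟨⟨a, rfl⟩, h⟩
      exact ⟨a, h, rfl⟩
    · rintro ⟨a, h, rfl⟩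
      exact ⟨⟨a, rfl⟩, h⟩
  rw [this, Set.ncard_image_of_injective _ (Function.update_injective x k)]

open Classical in
noncomputable def col {n : ℕ} (C₁ C₂ : Set (Fin n → V4)) (y : Fin n → V4) : ℤ :=
  if y ∈ C₁ then 1 else if y ∈ C₂ then -1 else 0

theorem col_ne {n : ℕ} (C₁ C₂ : Set (Fin n → V4)) (y : Fin n → V4) :
    col C₁ C₂ y ≠ 0 ↔ y ∈ C₁ ∪ C₂ := by
  unfold col
  by_cases h1 : y ∈ C₁ <;> by_cases h2 : y ∈ C₂ <;> simp [h1, h2]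

theorem col_good {n : ℕ} {C₁ C₂ : Set (Fin n → V4)} (h1 : IsMDSCode C₁) (h2 : IsMDSCode C₂)
    (hd : Disjoint C₁ C₂) (x : Fin n → V4) (k : Fin n) :
    Good (fun a => col C₁ C₂ (Function.update x k a)) := by
  have e1 := h1 x k
  have e2 := h2 x k
  rw [edge_ncard, Set.ncard_eq_one] at e1 e2
  obtain ⟨p, hp⟩ := e1
  obtain ⟨q, hq⟩ := e2
  have hp' : ∀ a, Function.update x k a ∈ C₁ ↔ a = p := fun a => by
    have := Set.ext_iff.1 hp a
    simpa using this
  have hq' : ∀ a, Function.update x k a ∈ C₂ ↔ a = q := fun a => by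
    have := Set.ext_iff.1 hq a
    simpa using this
  refine ⟨p, q, ?_, fun a => ?_⟩
  · rintro rfl
    exact Set.disjoint_left.1 hd ((hp' p).2 rfl) ((hq' p).2 rfl)
  · simp only [col, hp', hq']

theorem split_main {n : ℕ} (hn : 2 ≤ n) (R : Set (Fin (n + 1) → V4)) (k : Fin (n + 1))
    (hR : IsSplittable R) : ∃ f : V4 → (Fin n → V4) → ℤ, Hor f ∧ Ver f ∧
      ∀ l x, f l x ≠ 0 ↔ k.insertNth l x ∈ R := by
  obtain ⟨C₁, C₂, h1, h2, hd, rfl⟩ := hR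
  refine ⟨fun l x => col C₁ C₂ (k.insertNth l x), ?_, ?_, fun l x => col_ne _ _ _⟩
  · intro l x i
    have := col_good h1 h2 hd (k.insertNth l x) (k.succAbove i)
    simpa only [Fin.insertNth_update] using this
  · intro x
    have := col_good h1 h2 hd (k.insertNth 0 x) k
    simpa only [Fin.update_insertNth] using this

def emb {n : ℕ} (b : Fin n → Bool) : Fin n → V4 := pt (fun _ => false) b

theorem unsplit {n : ℕ} (hn : 2 ≤ n) (S : Set (Fin (n + 1) → V4)) (k : Fin (n + 1))
    {l0 l1 l2 : V4} (h01 : l0 ≠ l1) (h02 : l0 ≠ l2) (h12 : l1 ≠ l2) (β1 β2 : Fin n → Bool)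
    (a0 : ∀ b, k.insertNth l0 (emb b) ∈ S)
    (a1 : ∀ b, k.insertNth l1 (emb b) ∈ S ↔ b = β1)
    (a2 : ∀ b, k.insertNth l2 (emb b) ∈ S ↔ b = β2) :
    ¬ IsSplittable S ∧ ¬ IsSplittable Sᶜ := by
  constructor
  · intro h
    obtain ⟨f, hf, hv, hfR⟩ := split_main hn S k h
    refine (main hn hf hv h01 h02 h12 _ (fun _ => false) β1 β2 rfl).1 ⟨?_, ?_, ?_⟩
    · intro b; exact (hfR _ _).2 (a0 b)
    · intro b; exact (hfR _ _).trans (a1 b)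
    · intro b; exact (hfR _ _).trans (a2 b)
  · intro h
    obtain ⟨f, hf, hv, hfR⟩ := split_main hn Sᶜ k h
    have hfR' : ∀ l x, f l x = 0 ↔ k.insertNth l x ∈ S := by
      intro l x
      have := hfR l x
      rw [Set.mem_compl_iff] at this
      exact not_iff_not.1 this
    refine (main hn hf hv h01 h02 h12 _ (fun _ => false) β1 β2 rfl).2 ⟨?_, ?_, ?_⟩
    · intro b; exact (hfR' _ _).2 (a0 b)
    · intro b; exact (hfR' _ _).trans (a1 b)
    · intro b; exact (hfR' _ _).trans (a2 b)

theorem emb_mem {n : ℕ} (b : Fin n → Bool) : emb b ∈ boolCube n := by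
  intro i
  simp only [emb, pt]
  cases b i <;> simp [mk]

theorem emb_inj {n : ℕ} {b c : Fin n → Bool} (h : emb b = emb c) : b = c := by
  funext i
  have := congrFun h i
  simp only [emb, pt] at this
  revert this
  generalize b i = x
  generalize c i = y
  revert x y
  decide

theorem exists_emb {n : ℕ} {x : Fin n → V4} (h : x ∈ boolCube n) : ∃ b, emb b = x := by
  refine ⟨fun i => decide (x i = 1), funext fun i => ?_⟩
  rcases h i with h | h <;> simp [emb, pt, h, mk]

def sel (a b c d : V4) : Bool → Bool → V4
  | false, false => a
  | false, true => b
  | true, false => c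
  | true, true => d

theorem comb : ∀ i a b c d : V4, a ≠ i → b ≠ i → c ≠ i → d ≠ i →
    (∀ l, l ≠ i → l = a ∨ l = b ∨ l = c ∨ l = d) →
    ∃ l1 l2 : V4, l1 ≠ l2 ∧ i ≠ l1 ∧ i ≠ l2 ∧
      (∃ u v, ∀ u' v', sel a b c d u' v' = l1 ↔ (u' = u ∧ v' = v)) ∧
      (∃ u v, ∀ u' v', sel a b c d u' v' = l2 ↔ (u' = u ∧ v' = v)) := by
  decide +kernel

theorem comb' (g : (Fin 2 → Bool) → V4) (i : V4) (hg : ∀ b, g b ≠ i)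
    (hs : ∀ l, l ≠ i → ∃ b, g b = l) :
    ∃ l1 l2 : V4, l1 ≠ l2 ∧ i ≠ l1 ∧ i ≠ l2 ∧
      (∃ β, ∀ b, g b = l1 ↔ b = β) ∧ (∃ β, ∀ b, g b = l2 ↔ b = β) := by
  have hb : ∀ b : Fin 2 → Bool, b = ![b 0, b 1] := by
    intro b; funext j; fin_cases j <;> rfl
  have hsel : ∀ u v, g ![u, v] = sel (g ![false, false]) (g ![false, true]) (g ![true, false])
      (g ![true, true]) u v := by
    intro u v; cases u <;> cases v <;> rfl
  obtain ⟨l1, l2, h12, h1, h2, ⟨u1, v1, e1⟩, ⟨u2, v2, e2⟩⟩ := comb i (g ![false, false])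
    (g ![false, true]) (g ![true, false]) (g ![true, true]) (hg _) (hg _) (hg _) (hg _) (by
      intro l hl
      obtain ⟨b, rfl⟩ := hs l hl
      rw [hb b]
      generalize b 0 = u
      generalize b 1 = v
      cases u <;> cases v <;> simp)
  have key : ∀ (u v : Bool) (b : Fin 2 → Bool), (b 0 = u ∧ b 1 = v) ↔ b = ![u, v] := by
    intro u v b
    constructor
    · rintro ⟨rfl, rfl⟩; exact hb b
    · rintro rfl; simp
  refine ⟨l1, l2, h12, h1, h2, ⟨![u1, v1], fun b => ?_⟩, ⟨![u2, v2], fun b => ?_⟩⟩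
  · rw [← key, ← e1, ← hsel, ← hb]
  · rw [← key, ← e2, ← hsel, ← hb]

end UBT

/-- Proposition 7: let `S ⊆ Σ^(n+1)` (`n + 1 ≥ 3`) be a double-MDS-code,
`k` a direction, and `P_i` the intersection of the `i`-th layer of `S` in
direction `k` with the Boolean cube.  If either (a) `n + 1 = 3`, some `P_i`
is the whole Boolean square, and all `P_i` are nonempty, or (b)
`{P₀,P₁,P₂,P₃} = {cube, {ᾱ}, {¬ᾱ}, cube \ {ᾱ,¬ᾱ}}` for some cube vertex `ᾱ`
with complement `¬ᾱ`, then neither `S` nor `Σ^(n+1) \ S` is splittable. -/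
theorem unsplittable_from_boolean_traces (n : ℕ) (hn : 3 ≤ n + 1)
    (S : Set (Fin (n + 1) → V4)) (hS : IsDoubleMDSCode S) (k : Fin (n + 1))
    (P : V4 → Set (Fin n → V4))
    (hP : ∀ i : V4, P i = layer S k i ∩ boolCube n)
    (hcase :
      (n + 1 = 3 ∧ (∃ i : V4, P i = boolCube n) ∧ ∀ i : V4, (P i).Nonempty) ∨
      (∃ α ∈ boolCube n,
        ({P 0, P 1, P 2, P 3} : Set (Set (Fin n → V4))) =
          {boolCube n, {α}, {fun i => 1 - α i},
            boolCube n \ {α, fun i => 1 - α i}})) :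
    ¬ IsSplittable S ∧ ¬ IsSplittable Sᶜ := by
  have hn2 : 2 ≤ n := by omega
  have hPm : ∀ l b, UBT.emb b ∈ P l ↔ k.insertNth l (UBT.emb b) ∈ S := by
    intro l b
    rw [hP]
    exact ⟨fun h => h.1, fun h => ⟨h, UBT.emb_mem b⟩⟩
  rcases hcase with ⟨hn3, ⟨i, hi⟩, hne⟩ | ⟨α, hα, hset⟩
  · obtain rfl : n = 2 := by omega
    have hg : ∀ b : Fin 2 → Bool, ∃ q, q ≠ i ∧
        ∀ l, k.insertNth l (UBT.emb b) ∈ S ↔ l = i ∨ l = q := by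
      intro b
      have e := hS (k.insertNth 0 (UBT.emb b)) k
      rw [UBT.edge_ncard, Set.ncard_eq_two] at e
      obtain ⟨p, q, hpq, he⟩ := e
      have he' : ∀ l, k.insertNth l (UBT.emb b) ∈ S ↔ l = p ∨ l = q := by
        intro l
        have := Set.ext_iff.1 he l
        simpa [Fin.update_insertNth] using this
      have hi' : k.insertNth i (UBT.emb b) ∈ S := by
        rw [← hPm, hi]; exact UBT.emb_mem b
      rcases (he' i).1 hi' with rfl | rfl
      · exact ⟨q, hpq.symm, he'⟩
      · exact ⟨p, hpq, fun l => (he' l).trans or_comm⟩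
    choose g hgi hgS using hg
    obtain ⟨l1, l2, h12, h1, h2, ⟨β1, e1⟩, ⟨β2, e2⟩⟩ := UBT.comb' g i hgi (by
      intro l hl
      obtain ⟨x, hx⟩ := hne l
      have hx' := hx
      rw [hP] at hx'
      obtain ⟨b, rfl⟩ := UBT.exists_emb hx'.2
      rcases (hgS b l).1 ((hPm l b).1 hx) with h | h
      · exact absurd h hl
      · exact ⟨b, h.symm⟩)
    refine UBT.unsplit hn2 S k h1 h2 h12 β1 β2 (fun b => (hgS b i).2 (Or.inl rfl)) ?_ ?_
    · intro b
      rw [hgS, ← e1]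
      exact ⟨fun h => (h.resolve_left h1.symm).symm, fun h => Or.inr h.symm⟩
    · intro b
      rw [hgS, ← e2]
      exact ⟨fun h => (h.resolve_left h2.symm).symm, fun h => Or.inr h.symm⟩
  · have hex : ∀ Q ∈ ({P 0, P 1, P 2, P 3} : Set (Set (Fin n → V4))), ∃ l, P l = Q := by
      rintro Q (h | h | h | h)
      · exact ⟨0, h.symm⟩
      · exact ⟨1, h.symm⟩
      · exact ⟨2, h.symm⟩
      · exact ⟨3, h.symm⟩
    rw [hset] at hex
    obtain ⟨l0, h0⟩ := hex (boolCube n) (by simp)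
    obtain ⟨l1, h1⟩ := hex {α} (by simp)
    obtain ⟨l2, h2⟩ := hex {fun i => 1 - α i} (by simp)
    have hα' : (fun i => 1 - α i) ∈ boolCube n := by
      intro i
      rcases hα i with h | h <;> simp [h]
    obtain ⟨β1, rfl⟩ := UBT.exists_emb hα
    obtain ⟨β2, hβ2⟩ := UBT.exists_emb hα'
    rw [← hβ2] at h2
    have a0 : ∀ b, UBT.emb b ∈ P l0 := fun b => by rw [h0]; exact UBT.emb_mem b
    have a1 : ∀ b, UBT.emb b ∈ P l1 ↔ b = β1 := fun b => by
      rw [h1, Set.mem_singleton_iff]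
      exact ⟨UBT.emb_inj, fun h => h ▸ rfl⟩
    have a2 : ∀ b, UBT.emb b ∈ P l2 ↔ b = β2 := fun b => by
      rw [h2, Set.mem_singleton_iff]
      exact ⟨UBT.emb_inj, fun h => h ▸ rfl⟩
    have hne : β1 ≠ β2 := by
      rintro rfl
      have := congrFun hβ2 ⟨0, by omega⟩
      revert this
      generalize UBT.emb β1 ⟨0, by omega⟩ = z
      revert z
      decide
    obtain ⟨c, hc1, hc2⟩ := UBT.exists_third hn2 β1 β2
    refine UBT.unsplit hn2 S k (l0 := l0) (l1 := l1) (l2 := l2) ?_ ?_ ?_ β1 β2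
      (fun b => (hPm _ _).1 (a0 b)) (fun b => (hPm _ _).symm.trans (a1 b))
      (fun b => (hPm _ _).symm.trans (a2 b))
    · rintro rfl; exact hc1 ((a1 c).1 (a0 c))
    · rintro rfl; exact hc2 ((a2 c).1 (a0 c))
    · rintro rfl; exact hne ((a2 β1).1 ((a1 β1).2 rfl))
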